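/- arXiv:1302.5988 — 4 statements merged into one kernel-verified Lean document; each statement's English description precedes it below -/
import Mathlib

section
/- Let (x_n, f_n) be a Schauder frame for a Banach space E and let z₀ ∈ E. If there exists a nonzero functional φ ∈ E* such that φ(x_n + z₀) = 0 for all n ∈ ℕ, then there exists a functional Φ ∈ E* such that Φ(x_n) = 1 for all n ∈ ℕ (namely Φ = −φ/φ(z₀), after showing φ(z₀) ≠ 0). -/
open Filter Finset

/-- `(x, f)` is a Schauder frame for `E`: for every `v ∈ E` the series
`∑ₙ f n v • x n` converges in norm to `v`. -/
def IsSchauderFrame {E : Type*} [NormedAddCommGroup E] [NormedSpace ℝ E]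
    (x : ℕ → E) (f : ℕ → E →L[ℝ] ℝ) : Prop :=
  ∀ v : E, Tendsto (fun N : ℕ => ∑ n ∈ Finset.range N, f n v • x n) atTop (nhds v)

/-- **Theorem 2.1.** Let `(x, f)` be a Schauder frame for a Banach space `E` and
`z₀ ∈ E`. If there is a nonzero functional `φ ∈ E*` with `φ (x n + z₀) = 0` for all
`n`, then there exists `Φ ∈ E*` with `Φ (x n) = 1` for all `n`
(namely `Φ = -φ / φ z₀`, after showing `φ z₀ ≠ 0`). -/
theorem stmt_2 (E : Type*) [NormedAddCommGroup E] [NormedSpace ℝ E] [CompleteSpace E]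
    (x : ℕ → E) (f : ℕ → E →L[ℝ] ℝ) (hframe : IsSchauderFrame x f)
    (z₀ : E) (φ : E →L[ℝ] ℝ) (hφ : φ ≠ 0) (hann : ∀ n : ℕ, φ (x n + z₀) = 0) :
    ∃ Φ : E →L[ℝ] ℝ, ∀ n : ℕ, Φ (x n) = 1 := by
  have hx : ∀ n, φ (x n) = -φ z₀ := by
    intro n
    have h := hann n
    rw [map_add] at h
    linarith
  have hz : φ z₀ ≠ 0 := by
    intro hz
    apply hφ
    ext v
    have h := (φ.continuous.tendsto v).comp (hframe v)
    have h0 : (φ ∘ fun N : ℕ => ∑ n ∈ Finset.range N, f n v • x n) = fun _ => (0 : ℝ) := by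
      funext N
      simp [map_sum, hx, hz]
    rw [h0] at h
    simpa using tendsto_nhds_unique h tendsto_const_nhds
  refine ⟨(-(φ z₀)⁻¹) • φ, fun n => ?_⟩
  simp [hx, hz]
end

section
/- In E = ℓ¹(ℕ), let x₁ = x₂ = (1/2)e₁ and x_n = e_{n−1} for n ≥ 3, and let z₀ = −e₁. Then the family {x_n + z₀}_{n∈ℕ} is total over (ℓ¹)*: every continuous linear functional f on ℓ¹ satisfying f(x_n + z₀) = 0 for all n ∈ ℕ is the zero functional. -/
/-- The canonical `n`-th unit vector of `ℓ¹(ℕ)`. -/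
noncomputable def e (n : ℕ) : lp (fun _ : ℕ => ℝ) 1 := lp.single 1 n (1 : ℝ)

/-- **Remark 2.2.** In `E = ℓ¹(ℕ)` (indexed from `0`), let `x 0 = x 1 = (1/2) e 0`,
`x (n+2) = e (n+1)`, and let `z₀ = -e 0`.  Then the family `{x n + z₀}` is total
over `(ℓ¹)*`: every continuous linear functional `f` on `ℓ¹` with
`f (x n + z₀) = 0` for all `n` is the zero functional. -/
theorem stmt_9 (x : ℕ → lp (fun _ : ℕ => ℝ) 1)
    (hx0 : x 0 = (1 / 2 : ℝ) • e 0) (hx1 : x 1 = (1 / 2 : ℝ) • e 0)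
    (hx : ∀ n : ℕ, x (n + 2) = e (n + 1)) (z₀ : lp (fun _ : ℕ => ℝ) 1)
    (hz₀ : z₀ = -e 0) :
    ∀ f : lp (fun _ : ℕ => ℝ) 1 →L[ℝ] ℝ, (∀ n : ℕ, f (x n + z₀) = 0) → f = 0 := by
  intro f hf
  have h0 : f (e 0) = 0 := by
    have h := hf 0
    rw [hx0, hz₀, map_add, map_neg, map_smul, smul_eq_mul] at h
    linarith
  have hn : ∀ n, f (e n) = 0 := by
    intro n
    cases n with
    | zero => exact h0
    | succ n =>
      have h := hf (n + 2)
      rw [hx, hz₀, map_add, map_neg, h0] at h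
      linarith
  ext v
  have hs := (lp.hasSum_single (E := fun _ : ℕ => ℝ) (p := 1) ENNReal.one_ne_top v).mapL f
  have hz : ∀ n, f (lp.single 1 n (v n)) = 0 := by
    intro n
    have h2 : lp.single (E := fun _ : ℕ => ℝ) 1 n (v n) = (v n) • e n := by
      rw [e, ← lp.single_smul, smul_eq_mul, mul_one]
    rw [h2, map_smul, hn, smul_zero]
  simp only [hz] at hs
  simpa using hs.unique hasSum_zero
end

section
/- In E = ℓ¹(ℕ), let x₁ = x₂ = (1/2)e₁ and x_n = e_{n−1} for n ≥ 3. Then the subfamily {x_n}_{n≥2} obtained by deleting x₁ is still total over (ℓ¹)*: every continuous linear functional f on ℓ¹ with f(x_n) = 0 for all n ≥ 2 is the zero functional. Hence the retro Banach frame associated with {x_n} is not exact, and in particular is not of type P. -/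
/-- **Remark 3.1.** In `E = ℓ¹(ℕ)` (indexed from `0`), let `x 0 = x 1 = (1/2) e 0`
and `x (n+2) = e (n+1)`.  Then the proper subfamily `{x n}_{n ≥ 1}` obtained by
deleting `x 0` is still total over `(ℓ¹)*`: every continuous linear functional `f`
on `ℓ¹` with `f (x n) = 0` for all `n ≥ 1` is the zero functional.  (Hence, by
Lemma 1.1, the retro Banach frame associated with `{x n}` is not exact, and in
particular is not of type `P`.) -/
theorem stmt_10 (x : ℕ → lp (fun _ : ℕ => ℝ) 1)
    (hx0 : x 0 = (1 / 2 : ℝ) • e 0) (hx1 : x 1 = (1 / 2 : ℝ) • e 0)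
    (hx : ∀ n : ℕ, x (n + 2) = e (n + 1)) :
    ∀ f : lp (fun _ : ℕ => ℝ) 1 →L[ℝ] ℝ, (∀ n : ℕ, 1 ≤ n → f (x n) = 0) → f = 0 := by
  intro f hf
  have he : ∀ n, f (e n) = 0 := by
    intro n
    cases n with
    | zero =>
      have h := hf 1 le_rfl
      rw [hx1, map_smul, smul_eq_mul] at h
      linarith
    | succ k =>
      have h := hf (k + 2) (by omega)
      rwa [hx] at h
  ext y
  have hs := (lp.hasSum_single (p := 1) (by simp) y).mapL f
  have hz : ∀ n, f (lp.single 1 n (y n)) = 0 := by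
    intro n
    have h1 : lp.single 1 n (y n) = (y n) • e n := by
      rw [e, ← lp.single_smul, smul_eq_mul, mul_one]
    rw [h1, map_smul, he, smul_zero]
  simp only [hz] at hs
  simpa using hs.unique hasSum_zero
end

section
/- In E = ℓ¹(ℕ), the family {n·e_n}_{n∈ℕ} is total over (ℓ¹)* (every f ∈ (ℓ¹)* with f(n·e_n) = 0 for all n is zero), the functional Ψ ∈ (ℓ¹)* given by the bounded sequence (1/n)_{n∈ℕ} ∈ ℓ∞ satisfies Ψ(n·e_n) = 1 for every n ∈ ℕ, and for every k ∈ ℕ there exists a nonzero f ∈ (ℓ¹)* (the k-th coordinate functional) with f(n·e_n) = 0 for all n ≠ k, so removing any element of the family destroys totality. -/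
/-- **Remark 3.2 (type P part).** In `E = ℓ¹(ℕ)` (indexed from `0`), the family
`{(n+1) • e n}` is total over `(ℓ¹)*` (every `f ∈ (ℓ¹)*` annihilating every
`(n+1) • e n` is zero); the functional `Ψ ∈ (ℓ¹)*` given by the bounded sequence
`(1/(n+1))ₙ ∈ ℓ∞`, i.e. `Ψ v = ∑' k, v k / (k+1)`, satisfies `Ψ ((n+1) • e n) = 1`
for every `n`; and for every `k` there is a nonzero `f ∈ (ℓ¹)*` (the `k`-th
coordinate functional) with `f ((n+1) • e n) = 0` for all `n ≠ k`, so removing any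
element of the family destroys totality. -/
theorem stmt_12 :
    (∀ f : lp (fun _ : ℕ => ℝ) 1 →L[ℝ] ℝ,
      (∀ n : ℕ, f (((n : ℝ) + 1) • e n) = 0) → f = 0) ∧
    (∃ Ψ : lp (fun _ : ℕ => ℝ) 1 →L[ℝ] ℝ,
      (∀ v : lp (fun _ : ℕ => ℝ) 1, Ψ v = ∑' k : ℕ, v k / ((k : ℝ) + 1)) ∧
      ∀ n : ℕ, Ψ (((n : ℝ) + 1) • e n) = 1) ∧
    (∀ k : ℕ, ∃ f : lp (fun _ : ℕ => ℝ) 1 →L[ℝ] ℝ,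
      f ≠ 0 ∧ (∀ v : lp (fun _ : ℕ => ℝ) 1, f v = v k) ∧
      ∀ n : ℕ, n ≠ k → f (((n : ℝ) + 1) • e n) = 0) := by
  have hsum : ∀ v : lp (fun _ : ℕ => ℝ) 1, Summable fun k => ‖v k‖ := by
    intro v
    have h := (lp.memℓp v).summable (by simp)
    simpa using h
  have hnorm : ∀ v : lp (fun _ : ℕ => ℝ) 1, ‖v‖ = ∑' k, ‖v k‖ := by
    intro v
    have h := lp.norm_eq_tsum_rpow (p := 1) (by simp) v
    simpa using h
  have hle : ∀ (v : lp (fun _ : ℕ => ℝ) 1) (k : ℕ), ‖v k / ((k : ℝ) + 1)‖ ≤ ‖v k‖ := by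
    intro v k
    rw [norm_div]
    apply div_le_self (norm_nonneg _)
    rw [Real.norm_eq_abs]
    have : (0 : ℝ) ≤ k := Nat.cast_nonneg k
    exact le_trans (by linarith) (le_abs_self _)
  have hs1 : ∀ v : lp (fun _ : ℕ => ℝ) 1, Summable fun k : ℕ => ‖v k / ((k : ℝ) + 1)‖ :=
    fun v => Summable.of_nonneg_of_le (fun _ => norm_nonneg _) (hle v) (hsum v)
  have hs2 : ∀ v : lp (fun _ : ℕ => ℝ) 1, Summable fun k : ℕ => v k / ((k : ℝ) + 1) :=
    fun v => (hs1 v).of_norm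
  have hpos : ∀ n : ℕ, (n : ℝ) + 1 ≠ 0 := fun n => by positivity
  refine ⟨?_, ?_, ?_⟩
  · intro f hf
    have hf' : ∀ n, f (e n) = 0 := by
      intro n
      have h := hf n
      rw [map_smul, smul_eq_mul] at h
      exact (mul_eq_zero.mp h).resolve_left (hpos n)
    ext v
    have h := (lp.hasSum_single (p := 1) (by simp) v).mapL f
    have h0 : ∀ n, f (lp.single 1 n (v n)) = 0 := by
      intro n
      have : (lp.single 1 n (v n) : lp (fun _ : ℕ => ℝ) 1) = v n • e n := by
        rw [e, ← lp.single_smul, smul_eq_mul, mul_one]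
      rw [this, map_smul, hf' n, smul_zero]
    simp only [h0] at h
    exact h.unique hasSum_zero
  · let L : lp (fun _ : ℕ => ℝ) 1 →ₗ[ℝ] ℝ :=
      { toFun := fun v => ∑' k : ℕ, v k / ((k : ℝ) + 1)
        map_add' := by
          intro v w
          rw [← (hs2 v).tsum_add (hs2 w)]
          congr 1; ext k
          simp [add_div]
        map_smul' := by
          intro c v
          simp only [RingHom.id_apply, smul_eq_mul]
          rw [← tsum_mul_left]
          congr 1; ext k
          simp [mul_div_assoc] }
    refine ⟨L.mkContinuous 1 ?_, fun v => rfl, ?_⟩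
    · intro v
      rw [one_mul, hnorm v]
      exact (norm_tsum_le_tsum_norm (hs1 v)).trans ((hs1 v).tsum_le_tsum (hle v) (hsum v))
    · intro n
      change ∑' k : ℕ, (((n : ℝ) + 1) • e n : lp (fun _ : ℕ => ℝ) 1) k / ((k : ℝ) + 1) = 1
      rw [tsum_eq_single n]
      · simp [e, lp.single_apply_self, hpos n]
      · intro k hk
        simp [e, lp.single_apply_ne, hk]
  · intro k
    let L : lp (fun _ : ℕ => ℝ) 1 →ₗ[ℝ] ℝ :=
      { toFun := fun v => v k
        map_add' := fun v w => rfl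
        map_smul' := fun c v => rfl }
    have hL : ∀ v, ‖L v‖ ≤ 1 * ‖v‖ := by
      intro v
      rw [one_mul]
      exact lp.norm_apply_le_norm one_ne_zero v k
    refine ⟨L.mkContinuous 1 hL, ?_, fun v => rfl, ?_⟩
    · intro h
      have h1 : (e k : lp (fun _ : ℕ => ℝ) 1) k = 0 := DFunLike.congr_fun h (e k)
      simp [e, lp.single_apply_self] at h1
    · intro n hn
      change (((n : ℝ) + 1) • e n : lp (fun _ : ℕ => ℝ) 1) k = 0
      simp [e, lp.single_apply_ne, hn.symm]
end
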